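/- Let λ ≥ 2 and 1/2 ≤ σ < 1, and let α satisfy 0 ≤ 2σ − 1 < α ≤ 1. Suppose u : [0,∞) → ℝ is continuous, ∫₀^∞ |u(y)|/(1+y)^{1+2σ} dy < ∞, u is differentiable on ℝ₊, and u′ ∈ C^α_+ (with u′ ∈ Lip_+ when α = 1). Then for every x > 0: the principal value C_σ^λ(x) := lim_{ε→0⁺} ∫_{y>0, ε≤|x−y|≤1} K_σ^λ(x,y)(x−y) dy exists, the integral ∫₀^∞ (u(x) − u(y) − u′(x)(x−y)·1_{{|x−y|≤1}}) K_σ^λ(x,y) dy converges absolutely, the integral ∫₀^∞ (W_t^λ u(x) − u(x)) t^{−1−σ} dt converges absolutely, and (1/Γ(−σ)) ∫₀^∞ (W_t^λ u(x) − u(x)) t^{−1−σ} dt = ∫₀^∞ (u(x) − u(y) − u′(x)(x−y)·1_{{|x−y|≤1}}) K_σ^λ(x,y) dy + u(x) B_σ^λ(x) + u′(x) C_σ^λ(x). -/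

import Mathlib

open Real MeasureTheory Set Filter

noncomputable section

/-- The modified Bessel function of the first kind `I_ν(z)`. -/
def besselI (ν z : ℝ) : ℝ :=
  ∑' k : ℕ, (z / 2) ^ (2 * (k : ℝ) + ν) / ((Nat.factorial k : ℝ) * Real.Gamma ((k : ℝ) + ν + 1))

/-- The Bessel heat kernel `W_t^λ(x,y)`. -/
def besselHeatKernel (lam t x y : ℝ) : ℝ :=
  Real.sqrt (x * y) / (2 * t) * besselI (lam - 1 / 2) (x * y / (2 * t)) *
    Real.exp (-(x ^ 2 + y ^ 2) / (4 * t))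

/-- The Bessel–Poisson kernel `P_t^λ(x,y)`, obtained by subordination. -/
def besselPoissonKernel (lam t x y : ℝ) : ℝ :=
  t / (2 * Real.sqrt Real.pi) *
    ∫ s in Set.Ioi (0 : ℝ),
      s ^ (-(3 : ℝ) / 2) * Real.exp (-t ^ 2 / (4 * s)) * besselHeatKernel lam s x y

/-- The Bessel heat semigroup `W_t^λ u (x)`. -/
def heatSemigroup (lam : ℝ) (u : ℝ → ℝ) (t x : ℝ) : ℝ :=
  ∫ y in Set.Ioi (0 : ℝ), besselHeatKernel lam t x y * u y

/-- The Bessel–Poisson semigroup `P_t^λ f (x)`. -/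
def poissonSemigroup (lam : ℝ) (f : ℝ → ℝ) (t x : ℝ) : ℝ :=
  ∫ y in Set.Ioi (0 : ℝ), besselPoissonKernel lam t x y * f y

/-- The set of Hölder quotients of `f` on `(0,∞)`. -/
def holderRatioSet (α : ℝ) (f : ℝ → ℝ) : Set ℝ :=
  {r | ∃ x y : ℝ, 0 < x ∧ 0 < y ∧ x ≠ y ∧ r = |f x - f y| / |x - y| ^ α}

/-- The set of growth quotients `|f x|/x^α` of `f` on `(0,∞)`. -/
def growthRatioSet (α : ℝ) (f : ℝ → ℝ) : Set ℝ :=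
  {r | ∃ x : ℝ, 0 < x ∧ r = |f x| / x ^ α}

/-- Membership in the Hölder space `C^α_+` (equal to `Lip_+` when `α = 1`). -/
def MemHolderPlus (α : ℝ) (f : ℝ → ℝ) : Prop :=
  ContinuousOn f (Set.Ioi 0) ∧ BddAbove (holderRatioSet α f) ∧ BddAbove (growthRatioSet α f)

/-- The `C^α_+` norm. -/
def holderPlusNorm (α : ℝ) (f : ℝ → ℝ) : ℝ :=
  sSup (holderRatioSet α f) + sSup (growthRatioSet α f)

/-- `Γ(-σ)`, written through the functional equation `Γ(-σ) = Γ(2-σ)/((-σ)(1-σ))`. -/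
def gammaNeg (σ : ℝ) : ℝ := Real.Gamma (2 - σ) / (-σ * (1 - σ))

/-- The kernel `K_σ^λ(x,y)`. -/
def fracKernelK (lam σ x y : ℝ) : ℝ :=
  1 / (-gammaNeg σ) * ∫ t in Set.Ioi (0 : ℝ), besselHeatKernel lam t x y * t ^ (-1 - σ)

/-- `W_t^λ 1 (x)`. -/
def heatOne (lam t x : ℝ) : ℝ := ∫ y in Set.Ioi (0 : ℝ), besselHeatKernel lam t x y

/-- The function `B_σ^λ(x)`. -/
def fracFunB (lam σ x : ℝ) : ℝ :=
  1 / gammaNeg σ * ∫ t in Set.Ioi (0 : ℝ), (heatOne lam t x - 1) * t ^ (-1 - σ)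

/-- The integer `m` with `m - 1 ≤ β < m`. -/
def fracOrder (β : ℝ) : ℕ := Nat.floor β + 1

/-- The Segovia–Wheeden fractional derivative `∂_t^β F(t)`, a complex number. -/
def fracDeriv (β : ℝ) (F : ℝ → ℝ) (t : ℝ) : ℂ :=
  Complex.exp (-(Real.pi * ((fracOrder β : ℝ) - β)) * Complex.I) /
      Complex.ofReal (Real.Gamma ((fracOrder β : ℝ) - β)) *
    Complex.ofReal
      (∫ s in Set.Ioi (0 : ℝ),
        iteratedDeriv (fracOrder β) F (t + s) * s ^ ((fracOrder β : ℝ) - β - 1))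

/-!
For `z = xy/(2t)` the Bessel heat kernel factors as the Gaussian kernel times `√(2πz) e^{-z}
I_{λ-1/2}(z)`, and Poisson's integral for `I_{λ-1/2}` shows that this factor is bounded and
equals `1 + O(1/z)`. For fixed `x` the two kernels therefore differ in mass by `O(min(1, t))`,
which is integrable against `t^{-1-σ} dt` for every `0 < σ < 1`. Since the Gaussian kernel has
mass one and its truncated first moment about `x` vanishes by symmetry, the time integrals of
`W_t 1 - 1` and of the truncated first moment of `W_t` converge, the latter uniformly in the
inner truncation: this gives `B_σ^λ` and the principal value. The remaining part of `u` is the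
Taylor remainder at `x`, which is `O(|x - y|^{1+α})` with `1 + α > 2σ`; because `∫ W_t(x,y)
t^{-1-σ} dt` is at most a constant times `|x - y|^{-1-2σ}`, Fubini's theorem applies to it
absolutely.
-/

open scoped Topology

section BesselI

lemma integral_rpow_mul_one_sub_rpow {a b : ℝ} (ha : 0 < a) (hb : 0 < b) :
    ∫ x in (0 : ℝ)..1, x ^ (a - 1) * (1 - x) ^ (b - 1) = Gamma a * Gamma b / Gamma (a + b) := by
  have hbeta := Complex.betaIntegral_eq_Gamma_mul_div a b (by simpa) (by simpa)
  have hreal : ∫ x in (0 : ℝ)..1, (x : ℂ) ^ ((a : ℂ) - 1) * (1 - (x : ℂ)) ^ ((b : ℂ) - 1) =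
      ∫ x in (0 : ℝ)..1, ((x ^ (a - 1) * (1 - x) ^ (b - 1) : ℝ) : ℂ) := by
    refine intervalIntegral.integral_congr fun x hx => ?_
    rw [uIcc_of_le zero_le_one] at hx
    rw [Complex.ofReal_mul, Complex.ofReal_cpow hx.1, Complex.ofReal_cpow (sub_nonneg.2 hx.2)]
    push_cast
    rfl
  rw [← Complex.ofReal_add, Complex.Gamma_ofReal, Complex.Gamma_ofReal, Complex.Gamma_ofReal,
    Complex.betaIntegral, hreal, intervalIntegral.integral_ofReal] at hbeta
  exact_mod_cast hbeta

lemma integral_even_pow_mul_one_sub_sq_rpow {lam : ℝ} (hlam : 0 < lam) (k : ℕ) :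
    ∫ s in (0 : ℝ)..1, s ^ (2 * k) * (1 - s ^ 2) ^ (lam - 1) =
      Gamma (k + 1 / 2) * Gamma lam / Gamma (k + 1 / 2 + lam) / 2 := by
  have hsubst := intervalIntegral.integral_comp_mul_deriv_of_deriv_nonneg
    (a := 0) (b := 1) (f := fun s : ℝ => s ^ 2) (f' := fun s => 2 * s)
    (g := fun w => w ^ ((k : ℝ) + 1 / 2 - 1) * (1 - w) ^ (lam - 1)) (by fun_prop)
    (fun s _ => by simpa using hasDerivAt_pow 2 s)
    (fun s hs => by simp only [zero_le_one, inf_of_le_left] at hs; linarith [hs.1])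
  rw [zero_pow two_ne_zero, one_pow, integral_rpow_mul_one_sub_rpow (by positivity) hlam] at hsubst
  rw [← hsubst, eq_div_iff two_ne_zero, ← intervalIntegral.integral_mul_const,
    intervalIntegral.integral_of_le zero_le_one, intervalIntegral.integral_of_le zero_le_one]
  refine setIntegral_congr_fun measurableSet_Ioc fun s hs => ?_
  have hs0 : 0 < s := hs.1
  have hpow : (s ^ 2) ^ ((k : ℝ) + 1 / 2 - 1) * s = s ^ (2 * k) := by
    rw [← rpow_natCast s 2, ← rpow_mul hs0.le, ← rpow_add_one hs0.ne', ← rpow_natCast]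
    congr 1
    push_cast
    ring
  simp only [Function.comp_apply, ← hpow]
  ring

lemma Gamma_nat_add_half_mul_factorial (k : ℕ) :
    Gamma (k + 1 / 2) * k.factorial = (2 * k).factorial / 2 ^ (2 * k) * √π := by
  have h := Gamma_mul_Gamma_add_half ((k : ℝ) + 1 / 2)
  rw [show (k : ℝ) + 1 / 2 + 1 / 2 = k + 1 by ring, Gamma_nat_eq_factorial,
    show 2 * ((k : ℝ) + 1 / 2) = ((2 * k : ℕ) : ℝ) + 1 by push_cast; ring,
    Gamma_nat_eq_factorial, show (1 : ℝ) - (((2 * k : ℕ) : ℝ) + 1) = -((2 * k : ℕ) : ℝ) by ring,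
    rpow_neg zero_le_two, rpow_natCast] at h
  rw [h, div_eq_mul_inv]

lemma intervalIntegrable_one_sub_sq_rpow {lam : ℝ} (hlam : 0 < lam) :
    IntervalIntegrable (fun s : ℝ => (1 - s ^ 2) ^ (lam - 1)) volume 0 1 := by
  apply intervalIntegral.intervalIntegrable_of_integral_ne_zero
  have h := integral_even_pow_mul_one_sub_sq_rpow hlam 0
  simp only [mul_zero, pow_zero, one_mul] at h
  rw [h]
  have := Gamma_pos_of_pos hlam
  have := Gamma_pos_of_pos (show 0 < ((0 : ℕ) : ℝ) + 1 / 2 by simp)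
  have := Gamma_pos_of_pos (show 0 < ((0 : ℕ) : ℝ) + 1 / 2 + lam by positivity)
  positivity

lemma hasSum_integral_cosh_mul_one_sub_sq_rpow {lam : ℝ} (hlam : 0 < lam) {z : ℝ} (hz : 0 ≤ z) :
    HasSum (fun k : ℕ => z ^ (2 * k) / ((2 * k).factorial : ℝ) *
        (Gamma (k + 1 / 2) * Gamma lam / Gamma (k + 1 / 2 + lam) / 2))
      (∫ s in (0 : ℝ)..1, cosh (z * s) * (1 - s ^ 2) ^ (lam - 1)) := by
  have hdom : HasSum (fun k : ℕ => ∫ s in (0 : ℝ)..1,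
      (z * s) ^ (2 * k) / ((2 * k).factorial : ℝ) * (1 - s ^ 2) ^ (lam - 1))
      (∫ s in (0 : ℝ)..1, cosh (z * s) * (1 - s ^ 2) ^ (lam - 1)) := by
    refine intervalIntegral.hasSum_integral_of_dominated_convergence
      (fun k s => z ^ (2 * k) / ((2 * k).factorial : ℝ) * (1 - s ^ 2) ^ (lam - 1))
      (fun k => Measurable.aestronglyMeasurable (by fun_prop))
      (fun k => Eventually.of_forall fun s hs => ?_)
      (Eventually.of_forall fun s _ => (hasSum_cosh z).summable.mul_right _) ?_
      (Eventually.of_forall fun s _ => (hasSum_cosh (z * s)).mul_right _)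
    · rw [uIoc_of_le zero_le_one] at hs
      have hs0 : 0 ≤ s := hs.1.le
      have hw : 0 ≤ 1 - s ^ 2 := by nlinarith [hs.2]
      rw [norm_of_nonneg (by positivity)]
      gcongr
      exact mul_le_of_le_one_right hz hs.2
    · simp only [tsum_mul_right]
      exact (intervalIntegrable_one_sub_sq_rpow hlam).const_mul _
  refine hdom.congr_fun fun k => ?_
  rw [← integral_even_pow_mul_one_sub_sq_rpow hlam, ← intervalIntegral.integral_const_mul]
  simp only [mul_pow]
  congr 1 with s
  ring

/-- Poisson's integral. -/
lemma besselI_eq_integral_cosh {lam : ℝ} (hlam : 0 < lam) {z : ℝ} (hz : 0 < z) :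
    besselI (lam - 1 / 2) z = (z / 2) ^ (lam - 1 / 2) / (√π * Gamma lam) *
      (2 * ∫ s in (0 : ℝ)..1, cosh (z * s) * (1 - s ^ 2) ^ (lam - 1)) := by
  rw [← (((hasSum_integral_cosh_mul_one_sub_sq_rpow hlam hz.le).mul_left 2).mul_left
    ((z / 2) ^ (lam - 1 / 2) / (√π * Gamma lam))).tsum_eq, besselI]
  congr 1 with k
  have hΓlam : Gamma lam ≠ 0 := (Gamma_pos_of_pos hlam).ne'
  have hk : (k.factorial : ℝ) ≠ 0 := by positivity
  rw [eq_div_iff hk |>.2 (Gamma_nat_add_half_mul_factorial k), rpow_add (by positivity),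
    show (k : ℝ) + (lam - 1 / 2) + 1 = k + 1 / 2 + lam by ring,
    show (2 * (k : ℝ)) = ((2 * k : ℕ) : ℝ) by push_cast; ring, rpow_natCast, div_pow]
  field_simp

@[fun_prop]
lemma measurable_besselI (ν : ℝ) : Measurable (besselI ν) :=
  Measurable.tsum fun _ => by fun_prop

end BesselI

section BesselRatio

/-- The normalization `√(2πz) e^{-z} I_{λ-1/2}(z)`, tending to `1` as `z → ∞`: at `z = xy/(2t)` it
is the ratio of the Bessel heat kernel to the Gaussian heat kernel. -/
def besselRatio (lam z : ℝ) : ℝ := √(2 * π * z) * exp (-z) * besselI (lam - 1 / 2) z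

/-- The density, with respect to the Gamma weight `e^{-v} v^{λ-1}`, of the Laplace representation of
`besselRatio lam z`; it tends to `1` as `z → ∞`. -/
def laplaceDensity (lam z v : ℝ) : ℝ :=
  if v ≤ z then (1 + exp (-(2 * (z - v)))) * (1 - v / (2 * z)) ^ (lam - 1) else 0

lemma besselRatio_eq_integral_cosh {lam : ℝ} (hlam : 0 < lam) {z : ℝ} (hz : 0 < z) :
    besselRatio lam z = (Gamma lam)⁻¹ * ∫ v in (0 : ℝ)..z,
      2 * exp (-z) * (z / 2) ^ (lam - 1) * (cosh (z - v) * (1 - (1 - v / z) ^ 2) ^ (lam - 1)) := by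
  have hsubst := intervalIntegral.integral_comp_sub_div (a := 0) (b := z)
    (fun s : ℝ => cosh (z * s) * (1 - s ^ 2) ^ (lam - 1)) hz.ne' 1
  rw [div_self hz.ne', sub_self, zero_div, sub_zero, smul_eq_mul] at hsubst
  have hcosh : ∀ v, z * (1 - v / z) = z - v := fun v => by field_simp
  simp only [hcosh] at hsubst
  have hsqrt : √(2 * π * z) * (z / 2) ^ (lam - 1 / 2) = √π * z * (z / 2) ^ (lam - 1) := by
    rw [show lam - 1 / 2 = lam - 1 + 1 / 2 by ring, rpow_add (by positivity), ← sqrt_eq_rpow,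
      mul_left_comm, ← sqrt_mul (by positivity),
      show 2 * π * z * (z / 2) = π * z ^ 2 by ring, sqrt_mul pi_pos.le, sqrt_sq hz.le]
    ring
  rw [intervalIntegral.integral_const_mul, hsubst, besselRatio, besselI_eq_integral_cosh hlam hz]
  calc _ = √(2 * π * z) * (z / 2) ^ (lam - 1 / 2) * (exp (-z) / (√π * Gamma lam) *
        (2 * ∫ s in (0 : ℝ)..1, cosh (z * s) * (1 - s ^ 2) ^ (lam - 1))) := by ring
    _ = _ := by
      rw [hsqrt]
      field_simp

lemma cosh_mul_one_sub_sq_rpow_eq_laplaceDensity (lam : ℝ) {z v : ℝ} (hz : 0 < z) (hv : 0 ≤ v)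
    (hvz : v ≤ z) :
    2 * exp (-z) * (z / 2) ^ (lam - 1) * (cosh (z - v) * (1 - (1 - v / z) ^ 2) ^ (lam - 1)) =
      exp (-v) * v ^ (lam - 1) * laplaceDensity lam z v := by
  have hw : 0 ≤ 1 - v / (2 * z) := by
    rw [sub_nonneg, div_le_one (by positivity)]
    linarith
  have hfactor : 1 - (1 - v / z) ^ 2 = (z / 2)⁻¹ * v * (1 - v / (2 * z)) := by
    field_simp
    ring
  have hexp : exp (-z) * (2 * cosh (z - v)) = exp (-v) * (1 + exp (-(2 * (z - v)))) := by
    rw [cosh_eq, mul_div_cancel₀ _ two_ne_zero, mul_add, mul_add, ← exp_add, ← exp_add,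
      ← exp_add, mul_one]
    ring_nf
  have hpow : (z / 2) ^ (lam - 1) * (z / 2)⁻¹ ^ (lam - 1) = 1 := by
    rw [← mul_rpow (by positivity) (by positivity), mul_inv_cancel₀ (by positivity), one_rpow]
  rw [laplaceDensity, if_pos hvz, hfactor, mul_rpow (by positivity) hw, mul_rpow (by positivity) hv]
  linear_combination (v ^ (lam - 1) * (1 - v / (2 * z)) ^ (lam - 1)) *
    ((z / 2) ^ (lam - 1) * (z / 2)⁻¹ ^ (lam - 1) * hexp +
      exp (-v) * (1 + exp (-(2 * (z - v)))) * hpow)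

lemma besselRatio_eq_integral {lam : ℝ} (hlam : 0 < lam) {z : ℝ} (hz : 0 < z) :
    besselRatio lam z =
      (Gamma lam)⁻¹ * ∫ v in Ioi (0 : ℝ), exp (-v) * v ^ (lam - 1) * laplaceDensity lam z v := by
  rw [besselRatio_eq_integral_cosh hlam hz, intervalIntegral.integral_of_le hz.le,
    setIntegral_congr_fun measurableSet_Ioc fun v hv =>
      cosh_mul_one_sub_sq_rpow_eq_laplaceDensity lam hz hv.1.le hv.2,
    setIntegral_eq_of_subset_of_forall_sdiff_eq_zero measurableSet_Ioi Ioc_subset_Ioi_self]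
  intro v hv
  have hvz : ¬v ≤ z := fun h => hv.2 ⟨hv.1, h⟩
  rw [laplaceDensity, if_neg hvz, mul_zero]

lemma one_sub_rpow_sub_one_le {p w : ℝ} (hp : 0 < p) (hw0 : 0 ≤ w) (hw : w ≤ 1 / 2) :
    (1 - w) ^ (p - 1) ≤ 1 + 2 * w := by
  calc (1 - w) ^ (p - 1) ≤ (1 - w) ^ (-1 : ℝ) :=
        rpow_le_rpow_of_exponent_ge (by linarith) (by linarith) (by linarith)
    _ = 1 / (1 - w) := by rw [rpow_neg_one, one_div]
    _ ≤ 1 + 2 * w := by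
        rw [div_le_iff₀ (by linarith)]
        nlinarith

lemma abs_one_sub_rpow_sub_one_sub_one_le {p w : ℝ} (hp : 0 < p) (hw0 : 0 ≤ w) (hw : w ≤ 1 / 2) :
    |(1 - w) ^ (p - 1) - 1| ≤ (p + 2) * w := by
  have hlower : 1 - (p + 1) * w ≤ (1 - w) ^ (p - 1) :=
    calc 1 - (p + 1) * w = 1 + (p + 1) * -w := by ring
      _ ≤ (1 + -w) ^ (p + 1) := one_add_mul_self_le_rpow_one_add (by linarith) (by linarith)
      _ ≤ (1 - w) ^ (p - 1) := by
          rw [← sub_eq_add_neg]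
          exact rpow_le_rpow_of_exponent_ge (by linarith) (by linarith) (by linarith)
  have hupper := one_sub_rpow_sub_one_le hp hw0 hw
  have hpw : 0 ≤ p * w := by positivity
  rw [abs_le]
  constructor <;> linarith

lemma laplaceDensity_nonneg (lam : ℝ) {z v : ℝ} (hv : 0 ≤ v) : 0 ≤ laplaceDensity lam z v := by
  unfold laplaceDensity
  split_ifs with hvz
  · have hw : v / (2 * z) ≤ 1 := div_le_one_of_le₀ (by linarith) (by linarith)
    have := rpow_nonneg (sub_nonneg.2 hw) (lam - 1)
    positivity
  · exact le_rfl

lemma laplaceDensity_le {lam : ℝ} (hlam : 0 < lam) {z v : ℝ} (hz : 0 < z) (hv : 0 ≤ v) :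
    laplaceDensity lam z v ≤ 4 := by
  unfold laplaceDensity
  split_ifs with hvz
  · have hw : v / (2 * z) ≤ 1 / 2 := by
      rw [div_le_div_iff₀ (by positivity) two_pos]
      linarith
    have hpow := one_sub_rpow_sub_one_le hlam (by positivity) hw
    have hexp : exp (-(2 * (z - v))) ≤ 1 := exp_le_one_iff.2 (by linarith)
    have := rpow_nonneg (by linarith : 0 ≤ 1 - v / (2 * z)) (lam - 1)
    calc _ ≤ ((1 : ℝ) + 1) * 2 := by
          gcongr
          linarith
      _ = 4 := by norm_num
  · norm_num

lemma exp_neg_two_mul_sub_le {z v : ℝ} (hz : 0 < z) (hv : 0 ≤ v) (hvz : v ≤ z) :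
    exp (-(2 * (z - v))) ≤ (1 + v) / z := by
  have hlin : 1 + 2 * (z - v) ≤ exp (2 * (z - v)) := by linarith [add_one_le_exp (2 * (z - v))]
  have hd : 0 ≤ z - v := sub_nonneg.2 hvz
  rw [exp_neg, inv_le_comm₀ (exp_pos _) (by positivity), inv_div]
  refine le_trans ?_ hlin
  rw [div_le_iff₀ (by positivity)]
  nlinarith [mul_nonneg hd hv]

lemma abs_laplaceDensity_sub_one_le {lam : ℝ} (hlam : 0 < lam) {z v : ℝ} (hz : 0 < z)
    (hv : 0 ≤ v) : |laplaceDensity lam z v - 1| ≤ (lam + 3) / z * (1 + v) := by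
  unfold laplaceDensity
  split_ifs with hvz
  · have hw : v / (2 * z) ≤ 1 / 2 := by
      rw [div_le_div_iff₀ (by positivity) two_pos]
      linarith
    set e := exp (-(2 * (z - v)))
    set p := (1 - v / (2 * z)) ^ (lam - 1)
    have hp0 : 0 ≤ p := rpow_nonneg (by linarith) _
    have hp2 : p ≤ 2 := by linarith [one_sub_rpow_sub_one_le hlam (by positivity) hw]
    calc |(1 + e) * p - 1| = |(p - 1) + e * p| := by ring_nf
      _ ≤ |p - 1| + |e * p| := abs_add_le _ _
      _ ≤ (lam + 2) * (v / (2 * z)) + (1 + v) / z * 2 := by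
          rw [abs_of_nonneg (mul_nonneg (exp_pos _).le hp0)]
          gcongr
          · exact abs_one_sub_rpow_sub_one_sub_one_le hlam (by positivity) hw
          · exact exp_neg_two_mul_sub_le hz hv hvz
      _ ≤ (lam + 3) / z * (1 + v) := by
          field_simp
          nlinarith [mul_nonneg hlam.le hv]
  · rw [zero_sub, abs_neg, abs_one, div_mul_eq_mul_div, one_le_div hz]
    nlinarith

lemma measurable_laplaceDensity (lam z : ℝ) : Measurable (laplaceDensity lam z) :=
  Measurable.ite measurableSet_Iic (by fun_prop) measurable_const

lemma integrableOn_gammaWeight_mul_laplaceDensity {lam : ℝ} (hlam : 0 < lam) {z : ℝ} (hz : 0 < z) :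
    IntegrableOn (fun v => exp (-v) * v ^ (lam - 1) * laplaceDensity lam z v) (Ioi 0) := by
  refine (GammaIntegral_convergent hlam).mul_bdd (c := 4)
    (measurable_laplaceDensity lam z).aestronglyMeasurable ?_
  filter_upwards [ae_restrict_mem measurableSet_Ioi] with v (hv : 0 < v)
  rw [norm_of_nonneg (laplaceDensity_nonneg lam hv.le)]
  exact laplaceDensity_le hlam hz hv.le

lemma besselRatio_nonneg {lam : ℝ} (hlam : 0 < lam) {z : ℝ} (hz : 0 < z) :
    0 ≤ besselRatio lam z := by
  rw [besselRatio_eq_integral hlam hz]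
  refine mul_nonneg (inv_nonneg.2 (Gamma_pos_of_pos hlam).le)
    (setIntegral_nonneg measurableSet_Ioi fun v (hv : 0 < v) => ?_)
  have := laplaceDensity_nonneg lam (z := z) hv.le
  positivity

lemma besselRatio_le {lam : ℝ} (hlam : 0 < lam) {z : ℝ} (hz : 0 < z) : besselRatio lam z ≤ 4 := by
  rw [besselRatio_eq_integral hlam hz, inv_mul_le_iff₀ (Gamma_pos_of_pos hlam),
    Gamma_eq_integral hlam, ← integral_mul_const]
  refine setIntegral_mono_on (integrableOn_gammaWeight_mul_laplaceDensity hlam hz)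
    ((GammaIntegral_convergent hlam).mul_const 4) measurableSet_Ioi fun v (hv : 0 < v) => ?_
  gcongr
  exact laplaceDensity_le hlam hz hv.le

lemma abs_besselRatio_sub_one_le {lam : ℝ} (hlam : 0 < lam) {z : ℝ} (hz : 0 < z) :
    |besselRatio lam z - 1| ≤ (lam + 3) * (lam + 1) / z := by
  have hΓ : 0 < Gamma lam := Gamma_pos_of_pos hlam
  have hi : IntegrableOn (fun v => exp (-v) * v ^ (lam - 1)) (Ioi 0) :=
    GammaIntegral_convergent hlam
  have hi' : IntegrableOn (fun v => exp (-v) * v ^ (lam + 1 - 1)) (Ioi 0) :=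
    GammaIntegral_convergent (by linarith)
  have hdiff : besselRatio lam z - 1 = (Gamma lam)⁻¹ * ∫ v in Ioi (0 : ℝ),
      exp (-v) * v ^ (lam - 1) * (laplaceDensity lam z v - 1) := by
    simp only [mul_sub, mul_one]
    rw [integral_sub (integrableOn_gammaWeight_mul_laplaceDensity hlam hz) hi, mul_sub,
      ← besselRatio_eq_integral hlam hz, ← Gamma_eq_integral hlam, inv_mul_cancel₀ hΓ.ne']
  have hbound : ‖∫ v in Ioi (0 : ℝ), exp (-v) * v ^ (lam - 1) * (laplaceDensity lam z v - 1)‖ ≤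
      ∫ v in Ioi (0 : ℝ),
        (lam + 3) / z * (exp (-v) * v ^ (lam - 1) + exp (-v) * v ^ (lam + 1 - 1)) := by
    refine norm_integral_le_of_norm_le ((hi.add hi').const_mul _) ?_
    filter_upwards [ae_restrict_mem measurableSet_Ioi] with v (hv : 0 < v)
    rw [norm_mul, norm_of_nonneg (by positivity), add_sub_right_comm, rpow_add_one hv.ne']
    calc _ ≤ exp (-v) * v ^ (lam - 1) * ((lam + 3) / z * (1 + v)) := by
          gcongr
          exact abs_laplaceDensity_sub_one_le hlam hz hv.le
      _ = _ := by ring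
  rw [integral_const_mul, integral_add hi hi', ← Gamma_eq_integral hlam,
    ← Gamma_eq_integral (by linarith), Gamma_add_one hlam.ne'] at hbound
  rw [hdiff, abs_mul, abs_of_pos (inv_pos.2 hΓ), inv_mul_le_iff₀ hΓ]
  refine hbound.trans (le_of_eq ?_)
  ring

end BesselRatio

section GaussHeat

/-- The Gaussian heat kernel of `∂ₜ = ∂ₓ²` on the line, at time `t` and displacement `r`. -/
def gaussHeat (t r : ℝ) : ℝ := (√(4 * π * t))⁻¹ * exp (-r ^ 2 / (4 * t))

lemma gaussHeat_nonneg (t r : ℝ) : 0 ≤ gaussHeat t r := by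
  unfold gaussHeat
  positivity

lemma gaussHeat_neg (t r : ℝ) : gaussHeat t (-r) = gaussHeat t r := by
  rw [gaussHeat, gaussHeat, neg_sq]

lemma measurable_gaussHeat_sub (x : ℝ) : Measurable fun p : ℝ × ℝ => gaussHeat p.1 (x - p.2) := by
  unfold gaussHeat
  fun_prop

lemma gaussHeat_sub_eq_gaussianPDFReal {t : ℝ} (ht : 0 < t) (x y : ℝ) :
    gaussHeat t (x - y) = ProbabilityTheory.gaussianPDFReal x (2 * t).toNNReal y := by
  rw [gaussHeat, ProbabilityTheory.gaussianPDFReal, Real.coe_toNNReal _ (by positivity)]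
  ring_nf

lemma integrable_gaussHeat_sub {t : ℝ} (ht : 0 < t) (x : ℝ) :
    Integrable fun y => gaussHeat t (x - y) := by
  simp_rw [gaussHeat_sub_eq_gaussianPDFReal ht]
  exact ProbabilityTheory.integrable_gaussianPDFReal _ _

lemma integral_gaussHeat_sub {t : ℝ} (ht : 0 < t) (x : ℝ) : ∫ y, gaussHeat t (x - y) = 1 := by
  simp_rw [gaussHeat_sub_eq_gaussianPDFReal ht]
  exact ProbabilityTheory.integral_gaussianPDFReal_eq_one _ (by simpa using ht)

lemma integral_gaussHeat_sub_mul_sq {t : ℝ} (ht : 0 < t) (x : ℝ) :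
    ∫ y, gaussHeat t (x - y) * (x - y) ^ 2 = 2 * t := by
  have hvar := ProbabilityTheory.variance_fun_id_gaussianReal (μ := x) (v := (2 * t).toNNReal)
  rw [ProbabilityTheory.variance_eq_integral (by fun_prop),
    ProbabilityTheory.integral_id_gaussianReal,
    ProbabilityTheory.integral_gaussianReal_eq_integral_smul (by simpa using ht),
    Real.coe_toNNReal _ (by positivity)] at hvar
  simp_rw [gaussHeat_sub_eq_gaussianPDFReal ht, sub_sq_comm x]
  exact hvar

lemma integrable_gaussHeat_sub_mul_sq {t : ℝ} (ht : 0 < t) (x : ℝ) :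
    Integrable fun y => gaussHeat t (x - y) * (x - y) ^ 2 :=
  .of_integral_ne_zero (by rw [integral_gaussHeat_sub_mul_sq ht]; positivity)

/-- The right-hand side has the shape of the change of variables formula for `t ↦ t⁻¹`. -/
lemma gaussHeat_mul_rpow_eq {t : ℝ} (ht : 0 < t) (σ r : ℝ) :
    gaussHeat t r * t ^ (-1 - σ) = (√(4 * π))⁻¹ * ((|(-1 : ℝ)| * t ^ ((-1 : ℝ) - 1)) •
      ((t ^ (-1 : ℝ)) ^ (σ + 1 / 2 - 1) * exp (-(r ^ 2 / 4 * t ^ (-1 : ℝ))))) := by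
  have hsqrt : (√(4 * π * t))⁻¹ = (√(4 * π))⁻¹ * t ^ (-(1 / 2) : ℝ) := by
    rw [sqrt_mul (by positivity), mul_inv, rpow_neg ht.le, ← sqrt_eq_rpow]
  have hpow : t ^ (-(1 / 2) : ℝ) * t ^ (-1 - σ) =
      t ^ ((-1 : ℝ) - 1) * (t ^ (-1 : ℝ)) ^ (σ + 1 / 2 - 1) := by
    rw [← rpow_mul ht.le, ← rpow_add ht, ← rpow_add ht]
    ring_nf
  have hexponent : -r ^ 2 / (4 * t) = -(r ^ 2 / 4 * t ^ (-1 : ℝ)) := by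
    rw [rpow_neg_one]
    field_simp
  rw [gaussHeat, hsqrt, hexponent, abs_neg, abs_one, one_mul, smul_eq_mul]
  linear_combination (√(4 * π))⁻¹ * exp (-(r ^ 2 / 4 * t ^ (-1 : ℝ))) * hpow

lemma integrableOn_gaussHeat_mul_rpow {σ r : ℝ} (hσ : 0 < σ) (hr : r ≠ 0) :
    IntegrableOn (fun t => gaussHeat t r * t ^ (-1 - σ)) (Ioi 0) := by
  have hgamma : IntegrableOn
      (fun s : ℝ => s ^ (σ + 1 / 2 - 1) * exp (-(r ^ 2 / 4 * s))) (Ioi 0) := by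
    simpa using integrableOn_rpow_mul_exp_neg_mul_rpow (p := 1) (s := σ + 1 / 2 - 1)
      (b := r ^ 2 / 4) (by linarith) one_pos (by positivity)
  exact IntegrableOn.congr_fun
    (((integrableOn_Ioi_comp_rpow_iff _ (p := -1) (by norm_num)).2 hgamma).const_mul _)
    (fun t ht => (gaussHeat_mul_rpow_eq ht σ r).symm) measurableSet_Ioi

lemma integral_gaussHeat_mul_rpow {σ r : ℝ} (hσ : 0 < σ) (hr : r ≠ 0) :
    ∫ t in Ioi (0 : ℝ), gaussHeat t r * t ^ (-1 - σ) =
      (√(4 * π))⁻¹ * 4 ^ (σ + 1 / 2) * Gamma (σ + 1 / 2) * |r| ^ (-1 - 2 * σ) := by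
  have hr' : 0 < |r| := abs_pos.2 hr
  have hpow : (1 / (r ^ 2 / 4)) ^ (σ + 1 / 2) = 4 ^ (σ + 1 / 2) * |r| ^ (-1 - 2 * σ) := by
    rw [← sq_abs, one_div_div, div_rpow (by positivity) (by positivity), ← rpow_natCast |r| 2,
      ← rpow_mul hr'.le, show -1 - 2 * σ = -(((2 : ℕ) : ℝ) * (σ + 1 / 2)) by push_cast; ring,
      rpow_neg hr'.le, div_eq_mul_inv]
  rw [setIntegral_congr_fun measurableSet_Ioi fun t ht => gaussHeat_mul_rpow_eq ht σ r,
    integral_const_mul, integral_comp_rpow_Ioi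
      (fun s : ℝ => s ^ (σ + 1 / 2 - 1) * exp (-(r ^ 2 / 4 * s))) (by norm_num),
    integral_rpow_mul_exp_neg_mul_Ioi (by linarith) (by positivity), hpow]
  ring

end GaussHeat

section BesselHeatKernel

lemma besselHeatKernel_eq_gaussHeat_mul_besselRatio {t : ℝ} (ht : 0 < t) (lam : ℝ) {x y : ℝ}
    (hxy : 0 ≤ x * y) :
    besselHeatKernel lam t x y = gaussHeat t (x - y) * besselRatio lam (x * y / (2 * t)) := by
  have hratio : √(2 * π * (x * y / (2 * t))) = √(x * y) * √(π / t) := by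
    rw [← sqrt_mul hxy]
    congr 1
    field_simp
  have hgauss : √(4 * π * t) = 2 * t * √(π / t) := by
    rw [show 4 * π * t = (2 * t) ^ 2 * (π / t) by field_simp; ring,
      sqrt_mul (by positivity), sqrt_sq (by positivity)]
  have hexp : exp (-(x - y) ^ 2 / (4 * t)) =
      exp (x * y / (2 * t)) * exp (-(x ^ 2 + y ^ 2) / (4 * t)) := by
    rw [← exp_add]
    congr 1
    field_simp
    ring
  rw [besselHeatKernel, besselRatio, gaussHeat, hratio, hgauss, hexp, exp_neg]
  have : √(π / t) ≠ 0 := by positivity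
  field_simp

lemma measurable_besselHeatKernel (lam x : ℝ) :
    Measurable fun p : ℝ × ℝ => besselHeatKernel lam p.1 x p.2 := by
  unfold besselHeatKernel
  fun_prop

variable {lam t x : ℝ}

lemma besselHeatKernel_nonneg (hlam : 0 < lam) (ht : 0 < t) (hx : 0 < x) {y : ℝ} (hy : 0 < y) :
    0 ≤ besselHeatKernel lam t x y := by
  rw [besselHeatKernel_eq_gaussHeat_mul_besselRatio ht lam (by positivity)]
  exact mul_nonneg (gaussHeat_nonneg _ _) (besselRatio_nonneg hlam (by positivity))

lemma besselHeatKernel_le_gaussHeat (hlam : 0 < lam) (ht : 0 < t) (hx : 0 < x) {y : ℝ}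
    (hy : 0 < y) : besselHeatKernel lam t x y ≤ 4 * gaussHeat t (x - y) := by
  rw [besselHeatKernel_eq_gaussHeat_mul_besselRatio ht lam (by positivity), mul_comm]
  gcongr
  · exact gaussHeat_nonneg _ _
  · exact besselRatio_le hlam (by positivity)

lemma integrableOn_besselHeatKernel (hlam : 0 < lam) (ht : 0 < t) (hx : 0 < x) :
    IntegrableOn (besselHeatKernel lam t x) (Ioi 0) := by
  refine ((integrable_gaussHeat_sub ht x).const_mul 4).integrableOn.mono'
    ((measurable_besselHeatKernel lam x).comp measurable_prodMk_left).aestronglyMeasurable ?_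
  filter_upwards [ae_restrict_mem measurableSet_Ioi] with y hy
  rw [norm_of_nonneg (besselHeatKernel_nonneg hlam ht hx hy)]
  exact besselHeatKernel_le_gaussHeat hlam ht hx hy

end BesselHeatKernel

section Fubini

variable {lam σ x : ℝ} {D : ℝ → ℝ}

lemma ae_sub_ne_zero (x : ℝ) : ∀ᵐ y : ℝ, x - y ≠ 0 := by
  filter_upwards [compl_mem_ae_iff.2 (measure_singleton x)] with y hy h0
  exact hy (sub_eq_zero.1 h0).symm

lemma aestronglyMeasurable_of_mul_abs_sub_rpow {s : Set ℝ} {p : ℝ}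
    (hD : AEStronglyMeasurable (fun y => D y * |x - y| ^ p) (volume.restrict s)) :
    AEStronglyMeasurable D (volume.restrict s) := by
  refine (hD.mul (Measurable.aestronglyMeasurable (by fun_prop :
    Measurable fun y => (|x - y| ^ p)⁻¹))).congr ?_
  filter_upwards [ae_restrict_of_ae (ae_sub_ne_zero x)] with y hy
  exact mul_inv_cancel_right₀ (rpow_pos_of_pos (abs_pos.2 hy) _).ne' _

lemma integrable_prod_gaussHeat_mul (hσ : 0 < σ)
    (hD : IntegrableOn (fun y => D y * |x - y| ^ (-1 - 2 * σ)) (Ioi 0)) :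
    Integrable (fun p : ℝ × ℝ => gaussHeat p.1 (x - p.2) * D p.2 * p.1 ^ (-1 - σ))
      ((volume.restrict (Ioi 0)).prod (volume.restrict (Ioi 0))) := by
  have hmeas : AEStronglyMeasurable
      (fun p : ℝ × ℝ => gaussHeat p.1 (x - p.2) * D p.2 * p.1 ^ (-1 - σ))
      ((volume.restrict (Ioi 0)).prod (volume.restrict (Ioi 0))) :=
    ((measurable_gaussHeat_sub x).aestronglyMeasurable.mul
      (aestronglyMeasurable_of_mul_abs_sub_rpow hD.aestronglyMeasurable).comp_snd).mul
        (Measurable.aestronglyMeasurable (by fun_prop))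
  rw [integrable_prod_iff' hmeas]
  constructor
  · filter_upwards [ae_restrict_of_ae (ae_sub_ne_zero x)] with y hy
    simp_rw [mul_right_comm _ (D y)]
    exact (integrableOn_gaussHeat_mul_rpow hσ hy).mul_const (D y)
  · refine (hD.norm.const_mul
      ((√(4 * π))⁻¹ * 4 ^ (σ + 1 / 2) * Gamma (σ + 1 / 2))).congr ?_
    filter_upwards [ae_restrict_of_ae (ae_sub_ne_zero x)] with y hy
    have hnorm : ∫ t in Ioi (0 : ℝ), ‖gaussHeat t (x - y) * D y * t ^ (-1 - σ)‖ =
        ∫ t in Ioi (0 : ℝ), ‖D y‖ * (gaussHeat t (x - y) * t ^ (-1 - σ)) := by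
      refine setIntegral_congr_fun measurableSet_Ioi fun t (ht : 0 < t) => ?_
      simp only [norm_mul, norm_of_nonneg (gaussHeat_nonneg t (x - y)),
        norm_of_nonneg (rpow_nonneg ht.le (-1 - σ))]
      ring
    rw [hnorm, integral_const_mul, integral_gaussHeat_mul_rpow hσ hy, norm_mul,
      norm_of_nonneg (by positivity : 0 ≤ |x - y| ^ (-1 - 2 * σ))]
    ring

lemma integrable_prod_besselHeatKernel_mul (hlam : 0 < lam) (hσ : 0 < σ) (hx : 0 < x)
    (hD : IntegrableOn (fun y => D y * |x - y| ^ (-1 - 2 * σ)) (Ioi 0)) :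
    Integrable (fun p : ℝ × ℝ => besselHeatKernel lam p.1 x p.2 * D p.2 * p.1 ^ (-1 - σ))
      ((volume.restrict (Ioi 0)).prod (volume.restrict (Ioi 0))) := by
  refine ((integrable_prod_gaussHeat_mul hσ hD).norm.const_mul 4).mono'
    (((measurable_besselHeatKernel lam x).aestronglyMeasurable.mul
      (aestronglyMeasurable_of_mul_abs_sub_rpow hD.aestronglyMeasurable).comp_snd).mul
        (Measurable.aestronglyMeasurable (by fun_prop))) ?_
  rw [Measure.prod_restrict]
  filter_upwards [ae_restrict_mem (measurableSet_Ioi.prod measurableSet_Ioi)]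
    with ⟨t, y⟩ ⟨(ht : 0 < t), (hy : 0 < y)⟩
  simp only [norm_mul, norm_of_nonneg (besselHeatKernel_nonneg hlam ht hx hy),
    norm_of_nonneg (gaussHeat_nonneg t (x - y)), ← mul_assoc]
  gcongr
  exact besselHeatKernel_le_gaussHeat hlam ht hx hy

lemma integral_besselHeatKernel_mul_mul_rpow (lam σ x y d : ℝ) :
    ∫ t in Ioi (0 : ℝ), besselHeatKernel lam t x y * d * t ^ (-1 - σ) =
      d * ∫ t in Ioi (0 : ℝ), besselHeatKernel lam t x y * t ^ (-1 - σ) := by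
  simp_rw [← integral_const_mul, mul_left_comm d, mul_assoc]

lemma integrableOn_mul_fracKernelK (hlam : 0 < lam) (hσ : 0 < σ) (hx : 0 < x)
    (hD : IntegrableOn (fun y => D y * |x - y| ^ (-1 - 2 * σ)) (Ioi 0)) :
    IntegrableOn (fun y => D y * fracKernelK lam σ x y) (Ioi 0) := by
  have h := (integrable_prod_besselHeatKernel_mul hlam hσ hx hD).integral_prod_right
  simp only [integral_besselHeatKernel_mul_mul_rpow] at h
  simp_rw [fracKernelK, mul_left_comm (D _)]
  exact h.const_mul _

lemma ae_integrableOn_besselHeatKernel_mul (hlam : 0 < lam) (hσ : 0 < σ) (hx : 0 < x)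
    (hD : IntegrableOn (fun y => D y * |x - y| ^ (-1 - 2 * σ)) (Ioi 0)) :
    ∀ᵐ t ∂volume.restrict (Ioi (0 : ℝ)),
      IntegrableOn (fun y => besselHeatKernel lam t x y * D y) (Ioi 0) := by
  filter_upwards [(integrable_prod_besselHeatKernel_mul hlam hσ hx hD).prod_right_ae,
    ae_restrict_mem measurableSet_Ioi] with t hint (ht : 0 < t)
  exact (integrable_mul_const_iff (rpow_pos_of_pos ht _).ne'.isUnit _).1 hint

lemma integrableOn_heatSemigroup_mul_rpow (hlam : 0 < lam) (hσ : 0 < σ) (hx : 0 < x)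
    (hD : IntegrableOn (fun y => D y * |x - y| ^ (-1 - 2 * σ)) (Ioi 0)) :
    IntegrableOn (fun t => heatSemigroup lam D t x * t ^ (-1 - σ)) (Ioi 0) := by
  have h := (integrable_prod_besselHeatKernel_mul hlam hσ hx hD).integral_prod_left
  simpa only [IntegrableOn, heatSemigroup, integral_mul_const] using h

lemma integral_mul_fracKernelK (hlam : 0 < lam) (hσ : 0 < σ) (hx : 0 < x)
    (hD : IntegrableOn (fun y => D y * |x - y| ^ (-1 - 2 * σ)) (Ioi 0)) :
    ∫ y in Ioi (0 : ℝ), D y * fracKernelK lam σ x y =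
      -(1 / gammaNeg σ) * ∫ t in Ioi (0 : ℝ), heatSemigroup lam D t x * t ^ (-1 - σ) := by
  have hswap := integral_integral_swap (f := fun t y =>
    besselHeatKernel lam t x y * D y * t ^ (-1 - σ))
    (integrable_prod_besselHeatKernel_mul hlam hσ hx hD)
  simp only [integral_besselHeatKernel_mul_mul_rpow, integral_mul_const] at hswap
  simp_rw [heatSemigroup, hswap, fracKernelK, mul_left_comm (D _), integral_const_mul, one_div,
    inv_neg]

end Fubini

section HeatDefect

/-- The difference between the Gaussian heat kernel and the Bessel heat kernel extended by zero. -/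
def heatDefect (lam t x y : ℝ) : ℝ :=
  gaussHeat t (x - y) - (Ioi (0 : ℝ)).indicator (besselHeatKernel lam t x) y

variable {lam t x : ℝ}

lemma heatDefect_of_nonpos {y : ℝ} (hy : y ≤ 0) : heatDefect lam t x y = gaussHeat t (x - y) := by
  rw [heatDefect, indicator_of_notMem (notMem_Ioi.2 hy), sub_zero]

lemma heatDefect_of_pos {y : ℝ} (hy : 0 < y) :
    heatDefect lam t x y = gaussHeat t (x - y) - besselHeatKernel lam t x y := by
  rw [heatDefect, indicator_of_mem (mem_Ioi.2 hy)]

lemma abs_heatDefect_le (hlam : 0 < lam) (ht : 0 < t) (hx : 0 < x) (y : ℝ) :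
    |heatDefect lam t x y| ≤ 4 * gaussHeat t (x - y) := by
  have hG := gaussHeat_nonneg t (x - y)
  rcases le_or_gt y 0 with hy | hy
  · rw [heatDefect_of_nonpos hy, abs_of_nonneg hG]
    linarith
  · rw [heatDefect_of_pos hy, abs_le]
    constructor <;> linarith [besselHeatKernel_nonneg hlam ht hx hy,
      besselHeatKernel_le_gaussHeat hlam ht hx hy]

lemma abs_heatDefect_le_of_half_le (hlam : 0 < lam) (ht : 0 < t) (hx : 0 < x) {y : ℝ}
    (hy : x / 2 ≤ y) :
    |heatDefect lam t x y| ≤ 4 * ((lam + 3) * (lam + 1)) / x ^ 2 * t * gaussHeat t (x - y) := by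
  have hy0 : 0 < y := by linarith
  have hz : 0 < x * y / (2 * t) := by positivity
  rw [heatDefect_of_pos hy0, besselHeatKernel_eq_gaussHeat_mul_besselRatio ht lam (by positivity),
    ← mul_one_sub, abs_mul, abs_of_nonneg (gaussHeat_nonneg _ _), abs_sub_comm, mul_comm]
  gcongr
  · exact gaussHeat_nonneg _ _
  calc |besselRatio lam (x * y / (2 * t)) - 1|
      ≤ (lam + 3) * (lam + 1) / (x * y / (2 * t)) := abs_besselRatio_sub_one_le hlam hz
    _ ≤ (lam + 3) * (lam + 1) / (x * (x / 2) / (2 * t)) := by gcongr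
    _ = 4 * ((lam + 3) * (lam + 1)) / x ^ 2 * t := by
        field_simp
        norm_num

lemma abs_heatDefect_le_of_le_half (hlam : 0 < lam) (ht : 0 < t) (hx : 0 < x) {y : ℝ}
    (hy : y ≤ x / 2) :
    |heatDefect lam t x y| ≤ 16 / x ^ 2 * (gaussHeat t (x - y) * (x - y) ^ 2) := by
  have hfar : 1 ≤ 4 / x ^ 2 * (x - y) ^ 2 := by
    rw [div_mul_eq_mul_div, one_le_div (by positivity)]
    nlinarith
  calc |heatDefect lam t x y| ≤ 4 * gaussHeat t (x - y) * 1 := by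
        rw [mul_one]
        exact abs_heatDefect_le hlam ht hx y
    _ ≤ 4 * gaussHeat t (x - y) * (4 / x ^ 2 * (x - y) ^ 2) :=
        mul_le_mul_of_nonneg_left hfar (mul_nonneg zero_le_four (gaussHeat_nonneg _ _))
    _ = 16 / x ^ 2 * (gaussHeat t (x - y) * (x - y) ^ 2) := by ring

lemma integrable_heatDefect (hlam : 0 < lam) (ht : 0 < t) (hx : 0 < x) :
    Integrable (heatDefect lam t x) :=
  (integrable_gaussHeat_sub ht x).sub
    ((integrable_indicator_iff measurableSet_Ioi).2 (integrableOn_besselHeatKernel hlam ht hx))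

lemma integral_abs_heatDefect_le_four (hlam : 0 < lam) (ht : 0 < t) (hx : 0 < x) :
    ∫ y, |heatDefect lam t x y| ≤ 4 := by
  refine (integral_mono (integrable_heatDefect hlam ht hx).abs
    ((integrable_gaussHeat_sub ht x).const_mul 4) (abs_heatDefect_le hlam ht hx)).trans_eq ?_
  rw [integral_const_mul, integral_gaussHeat_sub ht, mul_one]

lemma integral_abs_heatDefect_le_mul (hlam : 0 < lam) (ht : 0 < t) (hx : 0 < x) :
    ∫ y, |heatDefect lam t x y| ≤ (4 * ((lam + 3) * (lam + 1)) + 32) / x ^ 2 * t := by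
  have hmass := (integrable_gaussHeat_sub ht x).const_mul
    (4 * ((lam + 3) * (lam + 1)) / x ^ 2 * t)
  have hvar := (integrable_gaussHeat_sub_mul_sq ht x).const_mul (16 / x ^ 2)
  calc ∫ y, |heatDefect lam t x y|
      ≤ ∫ y, (4 * ((lam + 3) * (lam + 1)) / x ^ 2 * t * gaussHeat t (x - y) +
          16 / x ^ 2 * (gaussHeat t (x - y) * (x - y) ^ 2)) := by
        refine integral_mono (integrable_heatDefect hlam ht hx).abs (hmass.add hvar) fun y => ?_
        have hG := gaussHeat_nonneg t (x - y)
        rcases le_total y (x / 2) with hy | hy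
        · exact (abs_heatDefect_le_of_le_half hlam ht hx hy).trans
            (le_add_of_nonneg_left (by positivity))
        · exact (abs_heatDefect_le_of_half_le hlam ht hx hy).trans
            (le_add_of_nonneg_right (by positivity))
    _ = (4 * ((lam + 3) * (lam + 1)) + 32) / x ^ 2 * t := by
        rw [integral_add hmass hvar, integral_const_mul, integral_const_mul,
          integral_gaussHeat_sub ht, integral_gaussHeat_sub_mul_sq ht]
        ring

lemma exists_integral_abs_heatDefect_le (hlam : 0 < lam) (hx : 0 < x) :
    ∃ C, ∀ t, 0 < t → ∫ y, |heatDefect lam t x y| ≤ C * min 1 t := by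
  refine ⟨4 + (4 * ((lam + 3) * (lam + 1)) + 32) / x ^ 2, fun t ht => ?_⟩
  rcases min_choice 1 t with h | h <;> rw [h]
  · refine (integral_abs_heatDefect_le_four hlam ht hx).trans ?_
    rw [mul_one]
    exact le_add_of_nonneg_right (by positivity)
  · refine (integral_abs_heatDefect_le_mul hlam ht hx).trans ?_
    gcongr
    exact le_add_of_nonneg_left zero_le_four

lemma heatSemigroup_eq_integral_gaussHeat_sub {g : ℝ → ℝ} {B : ℝ} (hlam : 0 < lam) (ht : 0 < t)
    (hx : 0 < x) (hg : Measurable g) (hgB : ∀ y, |g y| ≤ B) :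
    heatSemigroup lam g t x =
      (∫ y, gaussHeat t (x - y) * g y) - ∫ y, heatDefect lam t x y * g y := by
  have hbdd : ∀ᵐ y, ‖g y‖ ≤ B := Eventually.of_forall hgB
  rw [← integral_sub ((integrable_gaussHeat_sub ht x).mul_bdd hg.aestronglyMeasurable hbdd)
    ((integrable_heatDefect hlam ht hx).mul_bdd hg.aestronglyMeasurable hbdd),
    heatSemigroup, ← integral_indicator measurableSet_Ioi]
  simp_rw [← sub_mul, heatDefect, sub_sub_cancel, indicator_mul_left]

lemma abs_heatSemigroup_sub_integral_gaussHeat_le {g : ℝ → ℝ} {B : ℝ} (hlam : 0 < lam)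
    (ht : 0 < t) (hx : 0 < x) (hg : Measurable g) (hgB : ∀ y, |g y| ≤ B) :
    |heatSemigroup lam g t x - ∫ y, gaussHeat t (x - y) * g y| ≤
      B * ∫ y, |heatDefect lam t x y| := by
  rw [heatSemigroup_eq_integral_gaussHeat_sub hlam ht hx hg hgB, sub_sub_cancel_left, abs_neg,
    ← integral_const_mul, ← norm_eq_abs]
  refine norm_integral_le_of_norm_le ((integrable_heatDefect hlam ht hx).abs.const_mul _)
    (Eventually.of_forall fun y => ?_)
  rw [norm_mul, mul_comm]
  exact mul_le_mul_of_nonneg_right (hgB y) (abs_nonneg _)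

end HeatDefect

section TimeIntegral

variable {lam σ x B a : ℝ} {g : ℝ → ℝ}

lemma integrableOn_min_one_mul_rpow (hσ0 : 0 < σ) (hσ1 : σ < 1) :
    IntegrableOn (fun t : ℝ => min 1 t * t ^ (-1 - σ)) (Ioi 0) := by
  rw [← Ioc_union_Ioi_eq_Ioi (zero_le_one (α := ℝ))]
  refine IntegrableOn.union ?_ ?_
  · have hpow : IntegrableOn (fun t : ℝ => t ^ (-σ)) (Ioc 0 1) := by
      rw [← intervalIntegrable_iff_integrableOn_Ioc_of_le zero_le_one]
      exact intervalIntegral.intervalIntegrable_rpow' (by linarith)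
    refine hpow.congr_fun (fun t ht => ?_) measurableSet_Ioc
    rw [min_eq_right ht.2, mul_comm, ← rpow_add_one ht.1.ne', sub_add_eq_add_sub,
      neg_add_cancel, zero_sub]
  · have hpow : IntegrableOn (fun t : ℝ => t ^ (-1 - σ)) (Ioi 1) :=
      integrableOn_Ioi_rpow_of_lt (by linarith) one_pos
    refine hpow.congr_fun (fun t ht => ?_) measurableSet_Ioi
    rw [min_eq_left (le_of_lt ht), one_mul]

lemma measurable_heatSemigroup (lam x : ℝ) (hg : Measurable g) :
    Measurable fun t => heatSemigroup lam g t x :=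
  (((measurable_besselHeatKernel lam x).mul (hg.comp measurable_snd)).stronglyMeasurable
    |>.integral_prod_right').measurable

lemma exists_abs_heatSemigroup_sub_le (hlam : 0 < lam) (hx : 0 < x) (hB : 0 ≤ B) :
    ∃ C, ∀ g : ℝ → ℝ, Measurable g → (∀ y, |g y| ≤ B) → ∀ t, 0 < t →
      |heatSemigroup lam g t x - ∫ y, gaussHeat t (x - y) * g y| ≤ C * min 1 t := by
  obtain ⟨C, hC⟩ := exists_integral_abs_heatDefect_le hlam hx
  refine ⟨B * C, fun g hg hgB t ht => ?_⟩
  rw [mul_assoc]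
  exact (abs_heatSemigroup_sub_integral_gaussHeat_le hlam ht hx hg hgB).trans
    (mul_le_mul_of_nonneg_left (hC t ht) hB)

lemma integrableOn_heatSemigroup_sub_const (hlam : 0 < lam) (hσ0 : 0 < σ) (hσ1 : σ < 1)
    (hx : 0 < x) (hg : Measurable g) (hgB : ∀ y, |g y| ≤ B)
    (ha : ∀ t, 0 < t → ∫ y, gaussHeat t (x - y) * g y = a) :
    IntegrableOn (fun t => (heatSemigroup lam g t x - a) * t ^ (-1 - σ)) (Ioi 0) := by
  obtain ⟨C, hC⟩ := exists_abs_heatSemigroup_sub_le hlam hx ((abs_nonneg _).trans (hgB 0))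
  refine ((integrableOn_min_one_mul_rpow hσ0 hσ1).const_mul C).mono'
    (((measurable_heatSemigroup lam x hg).sub_const a).mul (by fun_prop)).aestronglyMeasurable ?_
  filter_upwards [ae_restrict_mem measurableSet_Ioi] with t (ht : 0 < t)
  rw [norm_mul, norm_of_nonneg (by positivity : 0 ≤ t ^ (-1 - σ)), ← mul_assoc]
  gcongr
  simpa only [norm_eq_abs, ha t ht] using hC g hg hgB t ht

lemma heatSemigroup_one (lam t x : ℝ) : heatSemigroup lam (fun _ => 1) t x = heatOne lam t x := by
  simp only [heatSemigroup, heatOne, mul_one]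

lemma integrableOn_heatOne_sub_one (hlam : 0 < lam) (hσ0 : 0 < σ) (hσ1 : σ < 1) (hx : 0 < x) :
    IntegrableOn (fun t => (heatOne lam t x - 1) * t ^ (-1 - σ)) (Ioi 0) := by
  simp_rw [← heatSemigroup_one]
  refine integrableOn_heatSemigroup_sub_const hlam hσ0 hσ1 hx measurable_const (B := 1)
    (fun _ => by simp) fun t ht => ?_
  simpa only [mul_one] using integral_gaussHeat_sub ht x

end TimeIntegral

section PrincipalValue

/-- The displacement `x - y`, set to zero off the annulus `ε ≤ |x - y| ≤ 1`; for `ε = 0` this is the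
first-order term of the truncated Taylor expansion at `x`. -/
def truncatedDisplacement (x ε y : ℝ) : ℝ := if ε ≤ |x - y| ∧ |x - y| ≤ 1 then x - y else 0

variable {lam σ t x ε : ℝ}

lemma truncatedDisplacement_zero (x y : ℝ) :
    truncatedDisplacement x 0 y = (x - y) * if |x - y| ≤ 1 then 1 else 0 := by
  simp only [truncatedDisplacement, abs_nonneg, true_and, mul_ite, mul_one, mul_zero]

lemma measurableSet_annulus (x ε : ℝ) : MeasurableSet {y : ℝ | ε ≤ |x - y| ∧ |x - y| ≤ 1} :=
  (by fun_prop : Measurable fun y => |x - y|) measurableSet_Icc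

@[fun_prop]
lemma measurable_truncatedDisplacement (x ε : ℝ) : Measurable (truncatedDisplacement x ε) :=
  Measurable.ite (measurableSet_annulus x ε) (by fun_prop) measurable_const

lemma abs_truncatedDisplacement_le_one (x ε y : ℝ) : |truncatedDisplacement x ε y| ≤ 1 := by
  rw [truncatedDisplacement]
  split_ifs with h
  · exact h.2
  · rw [abs_zero]
    exact zero_le_one

lemma truncatedDisplacement_reflect (x ε y : ℝ) :
    truncatedDisplacement x ε (2 * x - y) = -truncatedDisplacement x ε y := by
  have h : x - (2 * x - y) = -(x - y) := by ring
  simp only [truncatedDisplacement, h, abs_neg, neg_ite, neg_zero]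

lemma integral_gaussHeat_mul_truncatedDisplacement (t x ε : ℝ) :
    ∫ y, gaussHeat t (x - y) * truncatedDisplacement x ε y = 0 := by
  have hodd := integral_sub_left_eq_self
    (fun y => gaussHeat t (x - y) * truncatedDisplacement x ε y) volume (2 * x)
  have hrefl : ∀ y, gaussHeat t (x - (2 * x - y)) = gaussHeat t (x - y) := fun y => by
    rw [← gaussHeat_neg]
    congr 1
    ring
  simp only [hrefl, truncatedDisplacement_reflect, mul_neg, integral_neg] at hodd
  linarith

lemma integrable_truncatedDisplacement_mul_rpow (x : ℝ) {p : ℝ} (hε : 0 < ε) (hp : p ≤ 0) :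
    Integrable fun y => truncatedDisplacement x ε y * |x - y| ^ p := by
  have hsupp : Function.support (fun y => truncatedDisplacement x ε y * |x - y| ^ p) ⊆
      Metric.closedBall x 1 := fun y hy => by
    have h : ε ≤ |x - y| ∧ |x - y| ≤ 1 := by
      by_contra h
      exact hy (by simp only [truncatedDisplacement, if_neg h, zero_mul])
    rw [Metric.mem_closedBall, dist_comm, dist_eq]
    exact h.2
  refine (integrableOn_iff_integrable_of_support_subset hsupp).1
    (Measure.integrableOn_of_bounded (M := ε ^ p) measure_closedBall_lt_top.ne
      (Measurable.aestronglyMeasurable (by fun_prop)) (Eventually.of_forall fun y => ?_))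
  by_cases h : ε ≤ |x - y| ∧ |x - y| ≤ 1
  · rw [norm_mul, norm_of_nonneg (rpow_nonneg (abs_nonneg _) _)]
    exact (mul_le_of_le_one_left (by positivity) (abs_truncatedDisplacement_le_one x ε y)).trans
      (rpow_le_rpow_of_nonpos hε h.1 hp)
  · simp only [truncatedDisplacement, if_neg h, zero_mul, norm_zero]
    positivity

lemma setIntegral_annulus_eq (x ε : ℝ) (F : ℝ → ℝ) :
    ∫ y in {y : ℝ | 0 < y ∧ ε ≤ |x - y| ∧ |x - y| ≤ 1}, F y * (x - y) =
      ∫ y in Ioi (0 : ℝ), truncatedDisplacement x ε y * F y := by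
  change ∫ y in Ioi 0 ∩ {y : ℝ | ε ≤ |x - y| ∧ |x - y| ≤ 1}, F y * (x - y) = _
  rw [← setIntegral_indicator (measurableSet_annulus x ε)]
  congr with y
  simp only [indicator_apply, mem_ofPred_eq, truncatedDisplacement, ite_mul, zero_mul,
    mul_comm (F y)]

lemma tendsto_truncatedDisplacement (x y : ℝ) :
    Tendsto (fun ε => truncatedDisplacement x ε y) (𝓝[>] 0) (𝓝 (truncatedDisplacement x 0 y)) := by
  refine tendsto_const_nhds.congr' ?_
  rcases eq_or_ne x y with rfl | hxy
  · exact Eventually.of_forall fun ε => by simp only [truncatedDisplacement, sub_self, ite_self]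
  · filter_upwards [Ioo_mem_nhdsGT (abs_pos.2 (sub_ne_zero.2 hxy))] with ε hε
    simp only [truncatedDisplacement, abs_nonneg, hε.2.le]

lemma integrableOn_besselHeatKernel_mul_truncatedDisplacement (hlam : 0 < lam) (ht : 0 < t)
    (hx : 0 < x) (ε : ℝ) :
    IntegrableOn (fun y => besselHeatKernel lam t x y * truncatedDisplacement x ε y) (Ioi 0) :=
  (integrableOn_besselHeatKernel hlam ht hx).mul_bdd
    (Measurable.aestronglyMeasurable (by fun_prop))
    (Eventually.of_forall (abs_truncatedDisplacement_le_one x ε))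

lemma tendsto_heatSemigroup_truncatedDisplacement (hlam : 0 < lam) (ht : 0 < t) (hx : 0 < x) :
    Tendsto (fun ε => heatSemigroup lam (truncatedDisplacement x ε) t x) (𝓝[>] 0)
      (𝓝 (heatSemigroup lam (truncatedDisplacement x 0) t x)) := by
  refine tendsto_integral_filter_of_dominated_convergence (besselHeatKernel lam t x)
    (Eventually.of_forall fun ε =>
      (integrableOn_besselHeatKernel_mul_truncatedDisplacement hlam ht hx ε).aestronglyMeasurable)
    (Eventually.of_forall fun ε => ?_) (integrableOn_besselHeatKernel hlam ht hx)
    (Eventually.of_forall fun y => (tendsto_truncatedDisplacement x y).const_mul _)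
  filter_upwards [ae_restrict_mem measurableSet_Ioi] with y hy
  have hW := besselHeatKernel_nonneg hlam ht hx hy
  rw [norm_mul, norm_of_nonneg hW]
  exact mul_le_of_le_one_right hW (abs_truncatedDisplacement_le_one x ε y)

lemma integrableOn_heatSemigroup_truncatedDisplacement (hlam : 0 < lam) (hσ0 : 0 < σ)
    (hσ1 : σ < 1) (hx : 0 < x) (ε : ℝ) :
    IntegrableOn (fun t => heatSemigroup lam (truncatedDisplacement x ε) t x * t ^ (-1 - σ))
      (Ioi 0) := by
  simpa only [sub_zero] using integrableOn_heatSemigroup_sub_const hlam hσ0 hσ1 hx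
    (measurable_truncatedDisplacement x ε) (abs_truncatedDisplacement_le_one x ε)
    fun t _ => integral_gaussHeat_mul_truncatedDisplacement t x ε

-- The Gaussian part of the truncated first moment vanishes by symmetry, so only the heat defect has
-- to be dominated, uniformly in `ε`.
lemma tendsto_integral_heatSemigroup_truncatedDisplacement (hlam : 0 < lam) (hσ0 : 0 < σ)
    (hσ1 : σ < 1) (hx : 0 < x) :
    Tendsto (fun ε => ∫ t in Ioi (0 : ℝ),
        heatSemigroup lam (truncatedDisplacement x ε) t x * t ^ (-1 - σ)) (𝓝[>] 0)
      (𝓝 (∫ t in Ioi (0 : ℝ),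
        heatSemigroup lam (truncatedDisplacement x 0) t x * t ^ (-1 - σ))) := by
  obtain ⟨C, hC⟩ := exists_abs_heatSemigroup_sub_le hlam hx zero_le_one
  refine tendsto_integral_filter_of_dominated_convergence (fun t => C * (min 1 t * t ^ (-1 - σ)))
    (Eventually.of_forall fun ε =>
      (integrableOn_heatSemigroup_truncatedDisplacement hlam hσ0 hσ1 hx ε).aestronglyMeasurable)
    (Eventually.of_forall fun ε => ?_) ((integrableOn_min_one_mul_rpow hσ0 hσ1).const_mul C) ?_
  · filter_upwards [ae_restrict_mem measurableSet_Ioi] with t (ht : 0 < t)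
    rw [norm_mul, norm_of_nonneg (by positivity : 0 ≤ t ^ (-1 - σ)), ← mul_assoc]
    gcongr
    simpa only [norm_eq_abs, integral_gaussHeat_mul_truncatedDisplacement, sub_zero] using
      hC _ (measurable_truncatedDisplacement x ε) (abs_truncatedDisplacement_le_one x ε) t ht
  · filter_upwards [ae_restrict_mem measurableSet_Ioi] with t ht
    exact (tendsto_heatSemigroup_truncatedDisplacement hlam ht hx).mul_const _

theorem tendsto_integral_annulus_fracKernelK (hlam : 0 < lam) (hσ0 : 0 < σ) (hσ1 : σ < 1)
    (hx : 0 < x) :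
    Tendsto (fun ε => ∫ y in {y : ℝ | 0 < y ∧ ε ≤ |x - y| ∧ |x - y| ≤ 1},
        fracKernelK lam σ x y * (x - y)) (𝓝[>] 0)
      (𝓝 (-(1 / gammaNeg σ) * ∫ t in Ioi (0 : ℝ),
        heatSemigroup lam (truncatedDisplacement x 0) t x * t ^ (-1 - σ))) := by
  refine ((tendsto_integral_heatSemigroup_truncatedDisplacement hlam hσ0 hσ1 hx).const_mul
    _).congr' ?_
  filter_upwards [self_mem_nhdsWithin] with ε (hε : 0 < ε)
  rw [setIntegral_annulus_eq, integral_mul_fracKernelK hlam hσ0 hx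
    (integrable_truncatedDisplacement_mul_rpow x hε (by linarith)).integrableOn]

end PrincipalValue

section TaylorRemainder

/-- The first-order Taylor remainder at `x` with slope `c`, the linear term being cut off at
distance `1` from `x`; signed as the integrand of the singular integral. -/
def taylorRemainder (u : ℝ → ℝ) (c x y : ℝ) : ℝ :=
  u x - u y - c * (x - y) * (if |x - y| ≤ 1 then (1 : ℝ) else 0)

variable {lam σ α H c t x : ℝ} {u f : ℝ → ℝ}

lemma MemHolderPlus.exists_bound (hα : 0 < α) (hf : MemHolderPlus α f) :
    ∃ H : ℝ, 0 ≤ H ∧ ∀ a b : ℝ, 0 < a → 0 < b → |f a - f b| ≤ H * |a - b| ^ α := by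
  obtain ⟨M, hM⟩ := hf.2.1
  refine ⟨max M 0, le_max_right _ _, fun a b ha hb => ?_⟩
  rcases eq_or_ne a b with rfl | hab
  · simp only [sub_self, abs_zero, zero_rpow hα.ne', mul_zero, le_refl]
  · rw [← div_le_iff₀ (rpow_pos_of_pos (abs_pos.2 (sub_ne_zero.2 hab)) _)]
    exact (hM ⟨a, b, ha, hb, hab, rfl⟩).trans (le_max_left _ _)

lemma abs_sub_sub_deriv_mul_le {y : ℝ} (hα : 0 ≤ α) (hH : 0 ≤ H)
    (hdiff : ∀ w ∈ Ioi (0 : ℝ), DifferentiableAt ℝ u w)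
    (hu' : ∀ a b : ℝ, 0 < a → 0 < b → |deriv u a - deriv u b| ≤ H * |a - b| ^ α)
    (hx : 0 < x) (hy : 0 < y) :
    |u x - u y - deriv u x * (x - y)| ≤ H * |x - y| ^ (1 + α) := by
  have hpos : ∀ w ∈ uIcc x y, 0 < w := fun w hw => (lt_min hx hy).trans_le hw.1
  have hderiv : ∀ w ∈ uIcc x y, HasDerivWithinAt (fun w => u w - deriv u x * w)
      (deriv u w - deriv u x) (uIcc x y) w := fun w hw => by
    simpa only [id, mul_one] using ((hdiff w (hpos w hw)).hasDerivAt.fun_sub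
      ((hasDerivAt_id w).const_mul (deriv u x))).hasDerivWithinAt
  have hbound : ∀ w ∈ uIcc x y, ‖deriv u w - deriv u x‖ ≤ H * |x - y| ^ α := fun w hw => by
    refine (hu' w x (hpos w hw) hx).trans ?_
    have hwx : |w - x| ≤ |x - y| := abs_sub_comm x y ▸ abs_sub_left_of_mem_uIcc hw
    gcongr
  calc |u x - u y - deriv u x * (x - y)|
      = ‖u x - deriv u x * x - (u y - deriv u x * y)‖ := by
        rw [norm_eq_abs]
        congr 1
        ring
    _ ≤ H * |x - y| ^ α * ‖x - y‖ := (convex_uIcc x y).norm_image_sub_le_of_norm_hasDerivWithin_le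
        hderiv hbound right_mem_uIcc left_mem_uIcc
    _ = H * |x - y| ^ (1 + α) := by
        rw [norm_eq_abs, mul_assoc, ← rpow_add_one' (abs_nonneg _) (by positivity), add_comm α]

lemma integrableOn_abs_sub_rpow {s : ℝ} (hs : -1 < s) (x r : ℝ) :
    IntegrableOn (fun y => |x - y| ^ s) (Metric.closedBall x r) := by
  rcases lt_or_ge r 0 with hr | hr
  · rw [Metric.closedBall_eq_empty.2 hr]
    exact integrableOn_empty
  have hright : IntervalIntegrable (fun z : ℝ => |z| ^ s) volume 0 r := by
    refine (intervalIntegral.intervalIntegrable_rpow' hs).congr fun z hz => ?_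
    rw [uIoc_of_le hr] at hz
    simp only [abs_of_pos hz.1]
  have hleft : IntervalIntegrable (fun z : ℝ => |z| ^ s) volume (-r) 0 := by
    rw [IntervalIntegrable.iff_comp_neg]
    simpa only [abs_neg, neg_neg, neg_zero] using hright.symm
  have hshift := ((hleft.trans hright).comp_sub_left x).symm
  rwa [sub_neg_eq_add, intervalIntegrable_iff_integrableOn_Icc_of_le (by linarith),
    ← closedBall_eq_Icc] at hshift

lemma integrableOn_mul_abs_sub_rpow_near (hα : 2 * σ - 1 < α)
    (hf : AEStronglyMeasurable f (volume.restrict (Ioi 0)))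
    (hfH : ∀ y, 0 < y → |x - y| ≤ 1 → |f y| ≤ H * |x - y| ^ (1 + α)) :
    IntegrableOn (fun y => f y * |x - y| ^ (-1 - 2 * σ)) (Ioi 0 ∩ Metric.closedBall x 1) := by
  have hpow : IntegrableOn (fun y => |x - y| ^ (α - 2 * σ)) (Ioi 0 ∩ Metric.closedBall x 1) :=
    (integrableOn_abs_sub_rpow (by linarith) x 1).mono_set inter_subset_right
  refine (hpow.const_mul H).mono' ((hf.mono_set inter_subset_left).mul
    (Measurable.aestronglyMeasurable (by fun_prop))) ?_
  filter_upwards [ae_restrict_mem (measurableSet_Ioi.inter measurableSet_closedBall),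
    ae_restrict_of_ae (ae_sub_ne_zero x)] with y ⟨hy, hxy⟩ hne
  rw [Metric.mem_closedBall', dist_eq] at hxy
  rw [norm_mul, norm_of_nonneg (rpow_nonneg (abs_nonneg _) _)]
  calc ‖f y‖ * |x - y| ^ (-1 - 2 * σ)
      ≤ H * |x - y| ^ (1 + α) * |x - y| ^ (-1 - 2 * σ) := by
        gcongr
        exact hfH y hy hxy
    _ = H * |x - y| ^ (α - 2 * σ) := by
        rw [mul_assoc, ← rpow_add (abs_pos.2 hne)]
        congr 2
        ring

lemma abs_sub_rpow_le_of_one_le_abs_sub {y p : ℝ} (hx : 0 ≤ x) (hy : 0 ≤ y) (hp : p ≤ 0)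
    (hxy : 1 ≤ |x - y|) : |x - y| ^ p ≤ (2 + x) ^ (-p) * (1 + y) ^ p := by
  have hdiv : (1 + y) / (2 + x) ≤ |x - y| := by
    rw [div_le_iff₀ (by positivity)]
    nlinarith [neg_abs_le (x - y)]
  calc |x - y| ^ p ≤ ((1 + y) / (2 + x)) ^ p := rpow_le_rpow_of_nonpos (by positivity) hdiv hp
    _ = (2 + x) ^ (-p) * (1 + y) ^ p := by
        rw [div_rpow (by positivity) (by positivity), div_eq_inv_mul, ← rpow_neg (by positivity)]

lemma aestronglyMeasurable_of_div_one_add_rpow {p : ℝ}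
    (hu : AEStronglyMeasurable (fun y => u y / (1 + y) ^ p) (volume.restrict (Ioi 0))) :
    AEStronglyMeasurable u (volume.restrict (Ioi 0)) := by
  refine (hu.mul (Measurable.aestronglyMeasurable (by fun_prop :
    Measurable fun y : ℝ => (1 + y) ^ p))).congr ?_
  filter_upwards [ae_restrict_mem measurableSet_Ioi] with y (hy : 0 < y)
  exact div_mul_cancel₀ _ (by positivity)

lemma integrableOn_sub_mul_abs_sub_rpow_far (hσ : 0 < σ) (hx : 0 < x) (a : ℝ)
    (huL : IntegrableOn (fun y => u y / (1 + y) ^ (1 + 2 * σ)) (Ioi 0)) :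
    IntegrableOn (fun y => (a - u y) * |x - y| ^ (-1 - 2 * σ)) (Ioi 0 \ Metric.closedBall x 1) := by
  have hone : IntegrableOn (fun y : ℝ => (1 + y) ^ (-1 - 2 * σ)) (Ioi 0) := by
    simp_rw [add_comm (1 : ℝ)]
    exact integrableOn_add_rpow_Ioi_of_lt (by linarith) neg_one_lt_zero
  have hdom : IntegrableOn (fun y => (2 + x) ^ (1 + 2 * σ) *
      (|a| * (1 + y) ^ (-1 - 2 * σ) + |u y / (1 + y) ^ (1 + 2 * σ)|)) (Ioi 0) :=
    ((hone.const_mul |a|).add huL.abs).const_mul _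
  have humeas := aestronglyMeasurable_of_div_one_add_rpow huL.aestronglyMeasurable
  refine (hdom.mono_set sdiff_subset).mono'
    (((aestronglyMeasurable_const.sub humeas).mono_set sdiff_subset).mul
      (Measurable.aestronglyMeasurable (by fun_prop))) ?_
  filter_upwards [ae_restrict_mem (measurableSet_Ioi.diff measurableSet_closedBall)]
    with y ⟨(hy : 0 < y), hxy⟩
  rw [Metric.mem_closedBall', dist_eq, not_le] at hxy
  have hexp : -(-1 - 2 * σ) = 1 + 2 * σ := by ring
  have hfar := abs_sub_rpow_le_of_one_le_abs_sub (p := -1 - 2 * σ) hx.le hy.le (by linarith) hxy.le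
  rw [hexp] at hfar
  rw [norm_mul, norm_of_nonneg (rpow_nonneg (abs_nonneg _) _)]
  calc ‖a - u y‖ * |x - y| ^ (-1 - 2 * σ)
      ≤ (|a| + |u y|) * ((2 + x) ^ (1 + 2 * σ) * (1 + y) ^ (-1 - 2 * σ)) := by
        gcongr
        exact norm_sub_le _ _
    _ = (2 + x) ^ (1 + 2 * σ) * (|a| * (1 + y) ^ (-1 - 2 * σ) + |u y / (1 + y) ^ (1 + 2 * σ)|) := by
        rw [abs_div, abs_of_pos (by positivity : 0 < (1 + y) ^ (1 + 2 * σ)), div_eq_mul_inv,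
          ← rpow_neg (by positivity), ← hexp, neg_neg]
        ring

lemma taylorRemainder_of_abs_sub_le_one {y : ℝ} (h : |x - y| ≤ 1) :
    taylorRemainder u c x y = u x - u y - c * (x - y) := by
  rw [taylorRemainder, if_pos h, mul_one]

lemma taylorRemainder_of_one_lt_abs_sub {y : ℝ} (h : 1 < |x - y|) :
    taylorRemainder u c x y = u x - u y := by
  rw [taylorRemainder, if_neg h.not_ge, mul_zero, sub_zero]

lemma taylorRemainder_eq_sub_truncatedDisplacement (u : ℝ → ℝ) (c x y : ℝ) :
    taylorRemainder u c x y = u x - u y - c * truncatedDisplacement x 0 y := by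
  rw [taylorRemainder, truncatedDisplacement_zero, mul_assoc]

lemma integrableOn_taylorRemainder_mul_rpow (hσ : 0 < σ) (hα : 2 * σ - 1 < α) (hx : 0 < x)
    (huL : IntegrableOn (fun y => u y / (1 + y) ^ (1 + 2 * σ)) (Ioi 0))
    (hT : ∀ y, 0 < y → |x - y| ≤ 1 → |u x - u y - c * (x - y)| ≤ H * |x - y| ^ (1 + α)) :
    IntegrableOn (fun y => taylorRemainder u c x y * |x - y| ^ (-1 - 2 * σ)) (Ioi 0) := by
  have humeas := aestronglyMeasurable_of_div_one_add_rpow huL.aestronglyMeasurable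
  have hmeas : AEStronglyMeasurable (taylorRemainder u c x) (volume.restrict (Ioi 0)) := by
    simp_rw [funext (taylorRemainder_eq_sub_truncatedDisplacement u c x)]
    exact (aestronglyMeasurable_const.sub humeas).sub
      (Measurable.aestronglyMeasurable (by fun_prop))
  rw [← inter_union_sdiff (Ioi (0 : ℝ)) (Metric.closedBall x 1)]
  refine (integrableOn_mul_abs_sub_rpow_near (H := H) hα hmeas fun y hy hxy => ?_).union
    ((integrableOn_sub_mul_abs_sub_rpow_far hσ hx (u x) huL).congr_fun (fun y hy => ?_)
      (measurableSet_Ioi.diff measurableSet_closedBall))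
  · rw [taylorRemainder_of_abs_sub_le_one hxy]
    exact hT y hy hxy
  · have hxy := hy.2
    rw [Metric.mem_closedBall', dist_eq, not_le] at hxy
    simp only [taylorRemainder_of_one_lt_abs_sub hxy]

lemma integral_sub_sub {X E : Type*} [MeasurableSpace X] [NormedAddCommGroup E] [NormedSpace ℝ E]
    {μ : Measure X} {f g h : X → E} (hf : Integrable f μ) (hg : Integrable g μ)
    (hh : Integrable h μ) :
    ∫ a, (f a - g a - h a) ∂μ = ∫ a, f a ∂μ - ∫ a, g a ∂μ - ∫ a, h a ∂μ := by
  rw [← integral_sub hf hg, ← integral_sub (f := fun a => f a - g a) (hf.sub hg) hh]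

lemma heatSemigroup_sub_eq (hlam : 0 < lam) (ht : 0 < t) (hx : 0 < x)
    (hR : IntegrableOn (fun y => besselHeatKernel lam t x y * taylorRemainder u c x y) (Ioi 0)) :
    heatSemigroup lam u t x - u x = u x * (heatOne lam t x - 1) -
      heatSemigroup lam (taylorRemainder u c x) t x -
        c * heatSemigroup lam (truncatedDisplacement x 0) t x := by
  have hW := (integrableOn_besselHeatKernel hlam ht hx).const_mul (u x)
  have hM := (integrableOn_besselHeatKernel_mul_truncatedDisplacement hlam ht hx 0).const_mul c
  have hsplit : heatSemigroup lam u t x = ∫ y in Ioi (0 : ℝ),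
      (u x * besselHeatKernel lam t x y - besselHeatKernel lam t x y * taylorRemainder u c x y -
        c * (besselHeatKernel lam t x y * truncatedDisplacement x 0 y)) := by
    refine integral_congr_ae (Eventually.of_forall fun y => ?_)
    simp only [taylorRemainder_eq_sub_truncatedDisplacement]
    ring
  rw [hsplit, integral_sub_sub hW hR hM, integral_const_mul,
    integral_const_mul, ← heatOne, ← heatSemigroup, ← heatSemigroup]
  ring

end TaylorRemainder

theorem pointwise_formula_large_sigma_general {lam σ α H c x : ℝ} {u : ℝ → ℝ} (hlam : 0 < lam)
    (hσ0 : 0 < σ) (hσ1 : σ < 1) (hα : 2 * σ - 1 < α) (hx : 0 < x)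
    (huL : IntegrableOn (fun y => u y / (1 + y) ^ (1 + 2 * σ)) (Ioi 0))
    (hT : ∀ y, 0 < y → |x - y| ≤ 1 → |u x - u y - c * (x - y)| ≤ H * |x - y| ^ (1 + α)) :
    ∃ Cx : ℝ,
      Tendsto (fun ε : ℝ =>
          ∫ y in {y : ℝ | 0 < y ∧ ε ≤ |x - y| ∧ |x - y| ≤ 1}, fracKernelK lam σ x y * (x - y))
        (𝓝[>] 0) (𝓝 Cx) ∧
      IntegrableOn (fun y => taylorRemainder u c x y * fracKernelK lam σ x y) (Ioi 0) ∧
      IntegrableOn (fun t => (heatSemigroup lam u t x - u x) * t ^ (-1 - σ)) (Ioi 0) ∧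
      1 / gammaNeg σ * (∫ t in Ioi (0 : ℝ), (heatSemigroup lam u t x - u x) * t ^ (-1 - σ)) =
        (∫ y in Ioi (0 : ℝ), taylorRemainder u c x y * fracKernelK lam σ x y) +
          u x * fracFunB lam σ x + c * Cx := by
  have hR := integrableOn_taylorRemainder_mul_rpow hσ0 hα hx huL hT
  have hintB := (integrableOn_heatOne_sub_one hlam hσ0 hσ1 hx).const_mul (u x)
  have hintR := integrableOn_heatSemigroup_mul_rpow hlam hσ0 hx hR
  have hintM := (integrableOn_heatSemigroup_truncatedDisplacement hlam hσ0 hσ1 hx 0).const_mul c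
  have hsplit : (fun t => u x * ((heatOne lam t x - 1) * t ^ (-1 - σ)) -
      heatSemigroup lam (taylorRemainder u c x) t x * t ^ (-1 - σ) -
        c * (heatSemigroup lam (truncatedDisplacement x 0) t x * t ^ (-1 - σ)))
      =ᵐ[volume.restrict (Ioi 0)] fun t => (heatSemigroup lam u t x - u x) * t ^ (-1 - σ) := by
    filter_upwards [ae_integrableOn_besselHeatKernel_mul hlam hσ0 hx hR,
      ae_restrict_mem measurableSet_Ioi] with t hWR ht
    rw [heatSemigroup_sub_eq hlam ht hx hWR]
    ring
  refine ⟨_, tendsto_integral_annulus_fracKernelK hlam hσ0 hσ1 hx,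
    integrableOn_mul_fracKernelK hlam hσ0 hx hR, ((hintB.sub hintR).sub hintM).congr hsplit, ?_⟩
  rw [← integral_congr_ae hsplit, integral_sub_sub hintB hintR hintM, integral_const_mul,
    integral_const_mul, integral_mul_fracKernelK hlam hσ0 hx hR, fracFunB]
  ring

/-- Pointwise (principal value) formula for `Δ_λ^σ u` when `1/2 ≤ σ < 1`. -/
theorem pointwise_formula_large_sigma
    (lam σ α : ℝ) (hlam : 2 ≤ lam) (hσ0 : 1 / 2 ≤ σ) (hσ1 : σ < 1)
    (hα : 2 * σ - 1 < α) (hα1 : α ≤ 1)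
    (u : ℝ → ℝ) (hcont : ContinuousOn u (Set.Ici 0))
    (huL : IntegrableOn (fun y => |u y| / (1 + y) ^ (1 + 2 * σ)) (Set.Ioi 0))
    (hdiff : ∀ x ∈ Set.Ioi (0 : ℝ), DifferentiableAt ℝ u x)
    (hu' : MemHolderPlus α (deriv u)) :
    ∀ x : ℝ, 0 < x → ∃ Cx : ℝ,
      Tendsto (fun ε : ℝ =>
          ∫ y in {y : ℝ | 0 < y ∧ ε ≤ |x - y| ∧ |x - y| ≤ 1}, fracKernelK lam σ x y * (x - y))
        (nhdsWithin 0 (Set.Ioi 0)) (nhds Cx) ∧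
      IntegrableOn (fun y =>
          (u x - u y - deriv u x * (x - y) * (if |x - y| ≤ 1 then (1 : ℝ) else 0)) *
            fracKernelK lam σ x y) (Set.Ioi 0) ∧
      IntegrableOn (fun t => (heatSemigroup lam u t x - u x) * t ^ (-1 - σ)) (Set.Ioi 0) ∧
      1 / gammaNeg σ *
          (∫ t in Set.Ioi (0 : ℝ), (heatSemigroup lam u t x - u x) * t ^ (-1 - σ)) =
        (∫ y in Set.Ioi (0 : ℝ),
            (u x - u y - deriv u x * (x - y) * (if |x - y| ≤ 1 then (1 : ℝ) else 0)) *
              fracKernelK lam σ x y) +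
          u x * fracFunB lam σ x + deriv u x * Cx := by
  intro x hx
  obtain ⟨H, hH, hholder⟩ := hu'.exists_bound (by linarith)
  have humeas : AEStronglyMeasurable (fun y => u y / (1 + y) ^ (1 + 2 * σ))
      (volume.restrict (Ioi 0)) :=
    (((hcont.mono Ioi_subset_Ici_self).aemeasurable measurableSet_Ioi).div
      (by fun_prop)).aestronglyMeasurable
  have huL' : IntegrableOn (fun y => u y / (1 + y) ^ (1 + 2 * σ)) (Ioi 0) := by
    refine huL.mono' humeas ?_
    filter_upwards [ae_restrict_mem measurableSet_Ioi] with y (hy : 0 < y)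
    rw [norm_div, norm_eq_abs, norm_of_nonneg (by positivity)]
  exact pointwise_formula_large_sigma_general (by linarith) (by linarith) hσ1 hα hx huL'
    fun y hy _ => abs_sub_sub_deriv_mul_le (by linarith) hH hdiff hholder hx hy
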